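/- Let M = c + εD ∈ 𝔻ℍ[t] be a bounded monic reduced translational motion polynomial of degree n with c ∈ ℝ[t], D ∈ ℍ[t], and ν(M) = c² = Nⁿ for some monic irreducible quadratic N ∈ ℝ[t]. If M admits a factorization into monic linear motion polynomial factors, then c divides D·D* in ℝ[t]. -/

import Mathlib

open Polynomial DualNumber TrivSqZeroExt

noncomputable section

/-- The real quaternions. -/
abbrev Hq : Type := Quaternion ℝ

/-- The dual quaternions. -/
abbrev DHq : Type := DualNumber Hq

/-- Conjugation of a dual quaternion: `(p + ε d)* = p* + ε d*`. -/
instance : Star DHq := ⟨fun x => inl (star x.fst) + inr (star x.snd)⟩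

/-- Coefficient-wise (quaternion) conjugation of a polynomial. -/
def cstar {R : Type*} [Semiring R] [Star R] (A : R[X]) : R[X] :=
  A.sum fun n a => Polynomial.C (star a) * Polynomial.X ^ n

/-- The embedding `ℝ[t] → ℍ[t]`. -/
def qPoly (f : ℝ[X]) : Hq[X] := f.map (algebraMap ℝ Hq)

/-- The embedding `ℍ[t] → 𝔻ℍ[t]` (primal part). -/
def dhQ (P : Hq[X]) : DHq[X] := P.map (inlHom Hq Hq)

/-- The embedding `ℝ[t] → 𝔻ℍ[t]`. -/
def dPoly (f : ℝ[X]) : DHq[X] := dhQ (qPoly f)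

/-- The dual quaternion polynomial `P + ε D` with primal part `P` and dual part `D`. -/
def mp (P D : Hq[X]) : DHq[X] := dhQ P + Polynomial.C ε * dhQ D

/-- The primal part of a dual quaternion polynomial. -/
def primal (A : DHq[X]) : Hq[X] := A.map (fstHom ℝ Hq Hq).toRingHom

/-- A motion polynomial: a dual quaternion polynomial whose norm polynomial
`ν(M) = M·M*` is a nonzero real polynomial. -/
def IsMotion (M : DHq[X]) : Prop := ∃ f : ℝ[X], f ≠ 0 ∧ M * cstar M = dPoly f

/-- A real polynomial divides a quaternion polynomial. -/
def RDvdQ (f : ℝ[X]) (A : Hq[X]) : Prop := ∃ B : Hq[X], A = qPoly f * B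

/-- A real polynomial divides a dual quaternion polynomial. -/
def RDvdD (f : ℝ[X]) (A : DHq[X]) : Prop := ∃ B : DHq[X], A = dPoly f * B

/-- `g` is the greatest common monic real polynomial divisor of a quaternion polynomial `A`
(with itself), i.e. `g = mrpf A`. -/
def IsMrpfQ (g : ℝ[X]) (A : Hq[X]) : Prop :=
  g.Monic ∧ RDvdQ g A ∧ ∀ f : ℝ[X], f.Monic → RDvdQ f A → f ∣ g

/-- `g` is the greatest common monic real polynomial divisor of `c ∈ ℝ[t]` and a quaternion
polynomial `A`, i.e. `g = mrpf(c, A)`. -/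
def IsMrpf2 (g : ℝ[X]) (c : ℝ[X]) (A : Hq[X]) : Prop :=
  g.Monic ∧ g ∣ c ∧ RDvdQ g A ∧
    ∀ f : ℝ[X], f.Monic → f ∣ c → RDvdQ f A → f ∣ g

/-- `g` is the greatest common monic real polynomial divisor of `c ∈ ℝ[t]` and two quaternion
polynomials `A` and `B`, i.e. `g = mrpf(c, A, B)`. -/
def IsMrpf3 (g : ℝ[X]) (c : ℝ[X]) (A B : Hq[X]) : Prop :=
  g.Monic ∧ g ∣ c ∧ RDvdQ g A ∧ RDvdQ g B ∧
    ∀ f : ℝ[X], f.Monic → f ∣ c → RDvdQ f A → RDvdQ f B → f ∣ g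

/-- A quaternion polynomial is reduced: `mrpf = 1`, i.e. it has only constant real
polynomial factors. -/
def ReducedQ (A : Hq[X]) : Prop := ∀ f : ℝ[X], f.Monic → RDvdQ f A → f = 1

/-- A dual quaternion polynomial is reduced: `mrpf = 1`. -/
def ReducedD (A : DHq[X]) : Prop := ∀ f : ℝ[X], f.Monic → RDvdD f A → f = 1

/-- Boundedness of a (monic reduced) motion polynomial: `mrpf` of its primal part has
no real root, equivalently no linear real polynomial `t - a` divides the primal part. -/
def BoundedD (M : DHq[X]) : Prop :=
  ∀ a : ℝ, ¬ RDvdQ (Polynomial.X - Polynomial.C a) (primal M)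

/-- A generic motion polynomial: monic, a motion polynomial, with `mrpf` of the primal
part equal to `1`. -/
def GenericD (M : DHq[X]) : Prop :=
  M.Monic ∧ IsMotion M ∧ ReducedQ (primal M)

/-- The monic linear dual quaternion polynomial `t - p - ε d`. -/
def lin (p d : Hq) : DHq[X] := mp (Polynomial.X - Polynomial.C p) (-Polynomial.C d)

/-- `M` admits a factorization into monic linear motion polynomial factors. -/
def HasLinFact (M : DHq[X]) : Prop :=
  ∃ L : List DHq, (∀ h ∈ L, IsMotion (Polynomial.X - Polynomial.C h)) ∧
    M = (L.map fun h => Polynomial.X - Polynomial.C h).prod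

end

theorem cstar_coeff {R : Type*} [Semiring R] [Star R] (h0 : star (0 : R) = 0) (A : R[X]) (n : ℕ) :
    (cstar A).coeff n = star (A.coeff n) := by
  unfold cstar
  rw [Polynomial.sum_def, Polynomial.finsetSum_coeff]
  simp only [Polynomial.coeff_C_mul, Polynomial.coeff_X_pow]
  rw [Finset.sum_eq_single n]
  · simp
  · intro b _ hb
    simp [Ne.symm hb]
  · intro hn
    rw [Polynomial.notMem_support_iff] at hn
    simp [hn, h0]

theorem qc (A : Hq[X]) (n : ℕ) : (cstar A).coeff n = star (A.coeff n) :=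
  cstar_coeff (star_zero _) A n

theorem dstar_def (x : DHq) : star x = inl (star x.fst) + inr (star x.snd) := rfl

theorem dc (A : DHq[X]) (n : ℕ) : (cstar A).coeff n = star (A.coeff n) :=
  cstar_coeff (by rw [dstar_def]; simp) A n

theorem cstar_mul' (A B : Hq[X]) : cstar (A * B) = cstar B * cstar A := by
  ext1 n
  rw [qc, Polynomial.coeff_mul, Polynomial.coeff_mul, star_sum,
    ← Finset.Nat.sum_antidiagonal_swap]
  refine Finset.sum_congr rfl fun x _ => ?_
  simp [qc]

theorem cstar_add' (A B : Hq[X]) : cstar (A + B) = cstar A + cstar B := by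
  ext1 n
  simp [qc]

theorem cstar_sub' (A B : Hq[X]) : cstar (A - B) = cstar A - cstar B := by
  ext1 n
  simp [qc]

theorem cstar_cstar' (A : Hq[X]) : cstar (cstar A) = A := by
  ext1 n
  simp [qc]

theorem qPoly_comm (f : ℝ[X]) (A : Hq[X]) : qPoly f * A = A * qPoly f := by
  ext1 n
  rw [Polynomial.coeff_mul, Polynomial.coeff_mul, ← Finset.Nat.sum_antidiagonal_swap]
  refine Finset.sum_congr rfl fun x _ => ?_
  simp only [qPoly, Polynomial.coeff_map, Prod.fst_swap, Prod.snd_swap]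
  exact Algebra.commutes _ _

theorem qPoly_mul (f g : ℝ[X]) : qPoly (f * g) = qPoly f * qPoly g := by
  simp [qPoly]

theorem qPoly_inj {f g : ℝ[X]} (h : qPoly f = qPoly g) : f = g :=
  Polynomial.map_injective _ (algebraMap ℝ Hq).injective h

theorem qPoly_ne {f : ℝ[X]} (h : f ≠ 0) : qPoly f ≠ 0 := by
  intro h'
  exact h (qPoly_inj (by rw [h']; simp [qPoly]))

theorem mp_coeff (P D : Hq[X]) (n : ℕ) : (mp P D).coeff n = inl (P.coeff n) + inr (D.coeff n) := by
  unfold mp dhQ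
  rw [Polynomial.coeff_add, Polynomial.coeff_C_mul, Polynomial.coeff_map, Polynomial.coeff_map]
  ext1 <;> simp

theorem mp_inj {P D P' D' : Hq[X]} (h : mp P D = mp P' D') : P = P' ∧ D = D' := by
  have h1 : ∀ n, (inl (P.coeff n) + inr (D.coeff n) : DHq) = inl (P'.coeff n) + inr (D'.coeff n) := by
    intro n
    rw [← mp_coeff, ← mp_coeff, h]
  constructor
  · ext1 n
    simpa using congrArg TrivSqZeroExt.fst (h1 n)
  · ext1 n
    simpa using congrArg TrivSqZeroExt.snd (h1 n)

theorem mp_mul (P D P' D' : Hq[X]) : mp P D * mp P' D' = mp (P * P') (P * D' + D * P') := by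
  ext1 n
  rw [mp_coeff, Polynomial.coeff_mul]
  simp only [mp_coeff]
  ext1
  · simp [Polynomial.coeff_mul, TrivSqZeroExt.fst_sum]
  · simp [Polynomial.coeff_mul, TrivSqZeroExt.snd_sum, Finset.sum_add_distrib]

theorem cstar_mp (P D : Hq[X]) : cstar (mp P D) = mp (cstar P) (cstar D) := by
  ext1 n
  rw [dc, mp_coeff, mp_coeff, dstar_def, qc, qc]
  simp

theorem dPoly_mp (f : ℝ[X]) : dPoly f = mp (qPoly f) 0 := by
  simp [dPoly, mp, dhQ]

theorem lin_mp (h : DHq) : (X - C h : DHq[X]) = mp (X - C h.fst) (-C h.snd) := by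
  ext1 n
  rw [mp_coeff]
  simp only [coeff_sub, coeff_neg, coeff_X, coeff_C]
  ext1 <;> split_ifs <;> simp

/-- pair version of being a motion polynomial with norm `f` -/
def GP (P S : Hq[X]) (f : ℝ[X]) : Prop :=
  P * cstar P = qPoly f ∧ P * cstar S + S * cstar P = 0

theorem GP_iff (P S : Hq[X]) (f : ℝ[X]) : mp P S * cstar (mp P S) = dPoly f ↔ GP P S f := by
  rw [cstar_mp, mp_mul, dPoly_mp]
  constructor
  · intro h
    exact mp_inj h
  · rintro ⟨h1, h2⟩
    rw [h1, h2]

theorem GP_mul {P S P' S' : Hq[X]} {f f' : ℝ[X]} (h : GP P S f) (h' : GP P' S' f') :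
    GP (P * P') (P * S' + S * P') (f * f') := by
  obtain ⟨h1, h2⟩ := h
  obtain ⟨h3, h4⟩ := h'
  constructor
  · rw [cstar_mul', qPoly_mul, ← h1]
    calc P * P' * (cstar P' * cstar P) = P * (P' * cstar P') * cstar P := by noncomm_ring
      _ = P * cstar P * qPoly f' := by
        rw [h3, mul_assoc, qPoly_comm, mul_assoc]
  · rw [cstar_add', cstar_mul', cstar_mul', cstar_mul']
    calc P * P' * (cstar S' * cstar P + cstar P' * cstar S)
          + (P * S' + S * P') * (cstar P' * cstar P)
        = P * (P' * cstar S' + S' * cstar P') * cstar P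
          + (P * (P' * cstar P') * cstar S + S * (P' * cstar P') * cstar P) := by noncomm_ring
      _ = (P * cstar S + S * cstar P) * qPoly f' := by
        rw [h4, h3, mul_assoc P (qPoly f'), mul_assoc S (qPoly f'), qPoly_comm, qPoly_comm]
        noncomm_ring
      _ = 0 := by rw [h2, zero_mul]

theorem GP_one : GP 1 0 1 := by
  have h1 : cstar (1 : Hq[X]) = 1 := by
    ext1 n
    rw [qc, Polynomial.coeff_one]
    split_ifs <;> simp
  have h0 : cstar (0 : Hq[X]) = 0 := by
    ext1 n
    rw [qc]; simp
  constructor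
  · simp [h1, qPoly]
  · simp [h0]

theorem mp_one : mp 1 0 = 1 := by
  simp [mp, dhQ]

theorem GP_left {P S : Hq[X]} {f : ℝ[X]} (hf : f ≠ 0) (h : GP P S f) :
    cstar P * P = qPoly f ∧ cstar S * P + cstar P * S = 0 := by
  obtain ⟨h1, h2⟩ := h
  have hq := qPoly_ne hf
  have hP : P ≠ 0 := by
    rintro rfl
    rw [zero_mul] at h1
    exact hq h1.symm
  have h3 : cstar P * P = qPoly f := by
    apply mul_left_cancel₀ hP
    rw [← mul_assoc, h1, qPoly_comm]
  refine ⟨h3, ?_⟩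
  apply mul_left_cancel₀ hq
  calc qPoly f * (cstar S * P + cstar P * S)
      = qPoly f * cstar S * P + qPoly f * (cstar P * S) := by noncomm_ring
    _ = cstar P * P * cstar S * P + cstar P * S * (cstar P * P) := by
      rw [qPoly_comm f (cstar P * S), h3]
    _ = cstar P * (P * cstar S + S * cstar P) * P := by noncomm_ring
    _ = qPoly f * 0 := by rw [h2]; simp

theorem lin_norm {h : DHq} {f : ℝ[X]} (hf : (X - C h) * cstar (X - C h) = dPoly f) :
    f.Monic ∧ f.natDegree = 2 := by
  rw [lin_mp, GP_iff] at hf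
  have h1 := hf.1
  have h2 : cstar (X - C h.fst : Hq[X]) = X - C (star h.fst) := by
    ext1 n
    rw [qc]
    simp only [coeff_sub, coeff_X, coeff_C]
    split_ifs <;> simp
  rw [h2] at h1
  have hm : (qPoly f).Monic := by
    rw [← h1]
    exact (monic_X_sub_C _).mul (monic_X_sub_C _)
  have hd : (qPoly f).natDegree = 2 := by
    rw [← h1, (monic_X_sub_C _).natDegree_mul (monic_X_sub_C _)]
    simp
  constructor
  · exact Polynomial.monic_of_injective (algebraMap ℝ Hq).injective hm
  · rwa [qPoly, Polynomial.natDegree_map_eq_of_injective (algebraMap ℝ Hq).injective] at hd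

theorem list_dvd (L : List DHq) (hL : ∀ h ∈ L, IsMotion (X - C h)) :
    ∃ P S F, (L.map fun h => X - C h).prod = mp P S ∧ GP P S F ∧
      ∀ h ∈ L, ∃ f, (X - C h) * cstar (X - C h) = dPoly f ∧ f ∣ F := by
  induction L with
  | nil => exact ⟨1, 0, 1, by simp [mp_one], GP_one, by simp⟩
  | cons a L ih =>
    obtain ⟨P, S, F, h1, h2, h3⟩ := ih fun h hh => hL h (List.mem_cons_of_mem _ hh)
    obtain ⟨f, -, hf⟩ := hL a List.mem_cons_self
    have hg := hf
    rw [lin_mp, GP_iff] at hg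
    refine ⟨_, _, _, ?_, GP_mul hg h2, ?_⟩
    · rw [List.map_cons, List.prod_cons, h1, lin_mp, mp_mul]
    · intro h hh
      rcases List.mem_cons.1 hh with rfl | hh
      · exact ⟨f, hf, dvd_mul_right _ _⟩
      · obtain ⟨g, hg, hd⟩ := h3 h hh
        exact ⟨g, hg, hd.mul_left _⟩

theorem list_pow (N : ℝ[X]) (L : List DHq)
    (hL : ∀ h ∈ L, (X - C h) * cstar (X - C h) = dPoly N) :
    ∃ P S, (L.map fun h => X - C h).prod = mp P S ∧ GP P S (N ^ L.length) := by
  induction L with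
  | nil => exact ⟨1, 0, by simp [mp_one], by simpa using GP_one⟩
  | cons a L ih =>
    obtain ⟨P, S, h1, h2⟩ := ih fun h hh => hL h (List.mem_cons_of_mem _ hh)
    have hg := hL a List.mem_cons_self
    rw [lin_mp, GP_iff] at hg
    refine ⟨(X - C a.fst) * P, (X - C a.fst) * S + (-C a.snd) * P, ?_, ?_⟩
    · rw [List.map_cons, List.prod_cons, h1, lin_mp, mp_mul]
    · rw [List.length_cons, pow_succ']
      exact GP_mul hg h2

theorem half_factor {c : ℝ[X]} (hc : c ≠ 0) {Q S R S' D : Hq[X]} (hQ : GP Q S c) (hR : GP R S' c)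
    (h : mp (qPoly c) D = mp Q S * mp R S') : RDvdQ c (D * cstar D) := by
  rw [mp_mul] at h
  obtain ⟨h1, h2⟩ := mp_inj h
  obtain ⟨h3, -⟩ := GP_left hc hQ
  have hQ0 : Q ≠ 0 := by
    rintro rfl
    rw [zero_mul] at h1
    exact qPoly_ne hc h1
  have hRQ : R = cstar Q := by
    apply mul_left_cancel₀ hQ0
    rw [← h1, hQ.1]
  have h4 := (GP_left hc hR).2
  rw [hRQ, cstar_cstar'] at h4
  have h5 : D = (S - cstar S') * cstar Q := by
    rw [h2, hRQ, sub_mul]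
    rw [eq_neg_of_add_eq_zero_right h4]
    abel
  refine ⟨(S - cstar S') * cstar (S - cstar S'), ?_⟩
  rw [h5, cstar_mul', cstar_cstar']
  calc (S - cstar S') * cstar Q * (Q * cstar (S - cstar S'))
      = (S - cstar S') * (cstar Q * Q) * cstar (S - cstar S') := by noncomm_ring
    _ = _ := by rw [h3, ← qPoly_comm, mul_assoc]

/-- If a bounded monic reduced translational motion polynomial of primary norm admits a
linear factorization, then `c` divides `D·D*`. -/
theorem translational_primary_c_divides_norm
    (n : ℕ) (c : ℝ[X]) (D : Hq[X]) (N : ℝ[X]) (M : DHq[X])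
    (hM : M = mp (qPoly c) D)
    (hmonic : M.Monic) (hmotion : IsMotion M)
    (hred : ReducedD M) (hbdd : BoundedD M)
    (hdeg : M.natDegree = n)
    (hNmon : N.Monic) (hN2 : N.natDegree = 2) (hNirr : Irreducible N)
    (hcN : c ^ 2 = N ^ n)
    (hnorm : M * cstar M = dPoly (c ^ 2))
    (hfact : HasLinFact M) :
    RDvdQ c (D * cstar D) := by
  obtain ⟨L, hL, hprod⟩ := hfact
  have hN0 : N ≠ 0 := hNmon.ne_zero
  obtain ⟨P, S, F, h1, h2, h3⟩ := list_dvd L hL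
  have hF : F = N ^ n := by
    rw [← hcN]
    rw [hprod, h1, GP_iff] at hnorm
    exact qPoly_inj (h2.1.symm.trans hnorm.1)
  have hNp : Prime N := hNirr.prime
  have hLN : ∀ h ∈ L, (X - C h) * cstar (X - C h) = dPoly N := by
    intro h hh
    obtain ⟨f, hf, hd⟩ := h3 h hh
    obtain ⟨fm, fd⟩ := lin_norm hf
    rw [hF] at hd
    obtain ⟨j, -, hj⟩ := (dvd_prime_pow hNp n).1 hd
    have he : f = N ^ j := Polynomial.eq_of_monic_of_associated fm (hNmon.pow j) hj
    have hj1 : j = 1 := by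
      rw [he, hNmon.natDegree_pow, hN2] at fd
      omega
    rw [hf, he, hj1, pow_one]
  have hlen : ∀ {a b : ℕ}, N ^ a = N ^ b → a = b := by
    intro a b hab
    have := congrArg Polynomial.natDegree hab
    rw [hNmon.natDegree_pow, hNmon.natDegree_pow, hN2] at this
    omega
  have hLn : L.length = n := by
    obtain ⟨P', S', h4, h5⟩ := list_pow N L hLN
    rw [hprod, h4, GP_iff] at hnorm
    exact hlen ((qPoly_inj (h5.1.symm.trans hnorm.1)).trans hcN)
  have hcm : c.Monic := by
    have h := hmonic.map (fstHom ℝ Hq Hq).toRingHom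
    have h' : M.map (fstHom ℝ Hq Hq).toRingHom = qPoly c := by
      rw [hM]
      ext1 k
      rw [Polynomial.coeff_map, mp_coeff]
      simp
    rw [h'] at h
    exact Polynomial.monic_of_injective (algebraMap ℝ Hq).injective h
  obtain ⟨k, -, hk⟩ := (dvd_prime_pow hNp n).1 (hcN ▸ dvd_pow_self c two_ne_zero)
  have hck : c = N ^ k := Polynomial.eq_of_monic_of_associated hcm (hNmon.pow k) hk
  have hnk : n = k * 2 := by
    rw [hck, ← pow_mul] at hcN
    exact (hlen hcN).symm
  obtain ⟨Q, T, hQ1, hQ2⟩ := list_pow N (L.take k) fun h hh => hLN h (List.mem_of_mem_take hh)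
  obtain ⟨R, T', hR1, hR2⟩ := list_pow N (L.drop k) fun h hh => hLN h (List.mem_of_mem_drop hh)
  have e1 : (L.take k).length = k := by rw [List.length_take]; omega
  have e2 : (L.drop k).length = k := by rw [List.length_drop]; omega
  rw [e1, ← hck] at hQ2
  rw [e2, ← hck] at hR2
  refine half_factor hcm.ne_zero hQ2 hR2 ?_
  rw [← hM, hprod, ← hQ1, ← hR1, ← List.prod_append, ← List.map_append, List.take_append_drop]
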